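/- Let A be an mpM-algebra with 0 ≠ 1 such that ∇x = 1 for every x ≠ 0 (as holds in the simple mpM-algebras T₂, T₃, T₄). Equip the product A^k with componentwise operations and the shift automorphism t(x₁, x₂, …, x_k) = (x_k, x₁, x₂, …, x_{k-1}). Then (A^k, t) is a C_k-algebra and K(A^k) = {0, 1}, where K(A^k) = {z ∈ A^k : t(z) = z and ∇z = z}; consequently (A^k, t) is a simple C_k-algebra (its only c-filters are {1} and A^k). -/

import Mathlib

universe u

/-- Modal pseudocomplemented De Morgan algebra (mpM-algebra). -/
class MpM (A : Type u) extends DistribLattice A, BoundedOrder A where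
  dm : A → A   -- De Morgan negation ∼
  ps : A → A   -- pseudocomplement *
  dm_dm : ∀ x : A, dm (dm x) = x
  dm_sup : ∀ x y : A, dm (x ⊔ y) = dm x ⊓ dm y
  pseudo : ∀ a x : A, a ⊓ x = ⊥ ↔ x ≤ ps a
  modal : ∀ x : A, x ⊔ dm x ≤ x ⊔ ps x

open MpM

variable {A : Type u} [MpM A]

/-- ∇x = ∼(∼x ∧ x*) -/
def nabla (x : A) : A := dm (dm x ⊓ ps x)

/-- △x = ∼∇∼x -/
def tri (x : A) : A := dm (nabla (dm x))

/-- A C_k-algebra structure on an mpM-algebra `A`: an automorphism `t` with `t^k = id`. -/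
structure CkStr (A : Type u) [MpM A] (k : ℕ) where
  t : A → A
  bij : Function.Bijective t
  map_inf : ∀ x y : A, t (x ⊓ y) = t x ⊓ t y
  map_sup : ∀ x y : A, t (x ⊔ y) = t x ⊔ t y
  map_dm : ∀ x : A, t (dm x) = dm (t x)
  map_ps : ∀ x : A, t (ps x) = ps (t x)
  map_bot : t (⊥ : A) = ⊥
  map_top : t (⊤ : A) = ⊤
  periodic : ∀ x : A, t^[k] x = x

/-- Lattice filter: nonempty, upward closed, closed under binary meets. -/
def IsLatFilter (F : Set A) : Prop :=
  F.Nonempty ∧ (∀ x ∈ F, ∀ y : A, x ≤ y → y ∈ F) ∧ ∀ x ∈ F, ∀ y ∈ F, x ⊓ y ∈ F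

/-- c-filter: a filter closed under △ and t. -/
def IsCFilter {k : ℕ} (T : CkStr A k) (F : Set A) : Prop :=
  IsLatFilter F ∧ ∀ x ∈ F, tri x ∈ F ∧ T.t x ∈ F

/-- maximal c-filter: proper and not properly contained in a proper c-filter. -/
def IsMaxCFilter {k : ℕ} (T : CkStr A k) (N : Set A) : Prop :=
  IsCFilter T N ∧ N ≠ Set.univ ∧
    ∀ G : Set A, IsCFilter T G → G ≠ Set.univ → N ⊆ G → N = G

/-- prime filter -/
def IsPrimeFilter (P : Set A) : Prop :=
  IsLatFilter P ∧ P ≠ Set.univ ∧ ∀ x y : A, x ⊔ y ∈ P → x ∈ P ∨ y ∈ P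

/-- ultrafilter: maximal proper (lattice) filter -/
def IsUltraFilter (U : Set A) : Prop :=
  IsLatFilter U ∧ U ≠ Set.univ ∧
    ∀ G : Set A, IsLatFilter G → G ≠ Set.univ → U ⊆ G → U = G

/-- Birula–Rasiowa transformation φ(P) = A \ {∼x : x ∈ P}. -/
def brPhi (P : Set A) : Set A := Set.univ \ (dm '' P)

/-- a ⇁ b = (⋁_{i=1}^{k} ∇(∼ t^i(a))) ∨ b -/
def rimp {k : ℕ} (T : CkStr A k) (a b : A) : A :=
  ((Finset.Icc 1 k).sup fun i => nabla (dm (T.t^[i] a))) ⊔ b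

/-- cyclic deductive system -/
def IsCDS {k : ℕ} (T : CkStr A k) (D : Set A) : Prop :=
  (⊤ : A) ∈ D ∧ ∀ x ∈ D, ∀ y : A, rimp T x y ∈ D → y ∈ D

/-- maximal cyclic deductive system -/
def IsMaxCDS {k : ℕ} (T : CkStr A k) (M : Set A) : Prop :=
  IsCDS T M ∧ M ≠ Set.univ ∧
    ∀ G : Set A, IsCDS T G → G ≠ Set.univ → M ⊆ G → M = G

/-- the smallest cyclic deductive system containing `X` -/
def genCDS {k : ℕ} (T : CkStr A k) (X : Set A) : Set A :=
  ⋂₀ {D : Set A | IsCDS T D ∧ X ⊆ D}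

/-- K(A) = {x : t(x) = x and ∇x = x} -/
def Kset {k : ℕ} (T : CkStr A k) : Set A := {x : A | T.t x = x ∧ nabla x = x}

/-- consistency operator ∘x = ⋀_{i=0}^{k} t^i((∼x ∨ x) ∧ (x ∧ ∼x)*) -/
def cCirc {k : ℕ} (T : CkStr A k) (x : A) : A :=
  (Finset.Icc 0 k).inf fun i => T.t^[i] ((dm x ⊔ x) ⊓ ps (x ⊓ dm x))

/-- x → y = ∼((∼(x∨y))* ∧ (x∨y)) ∨ ((∼(x∧y))* ∧ (x∧y)) -/
def mpTo (x y : A) : A :=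
  dm (ps (dm (x ⊔ y)) ⊓ (x ⊔ y)) ⊔ (ps (dm (x ⊓ y)) ⊓ (x ⊓ y))

/-- x ⇒ y = (x → y) ∧ (∼y → ∼x) -/
def mpIff (x y : A) : A := mpTo x y ⊓ mpTo (dm y) (dm x)

instance piMpM (k : ℕ) : MpM (Fin k → A) where
  dm f := fun i => dm (f i)
  ps f := fun i => ps (f i)
  dm_dm f := funext fun i => dm_dm (f i)
  dm_sup f g := funext fun i => dm_sup (f i) (g i)
  pseudo a x := by
    constructor
    · intro h i
      exact (pseudo (a i) (x i)).mp (congrFun h i)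
    · intro h
      funext i
      exact (pseudo (a i) (x i)).mpr (h i)
  modal f := fun i => modal (f i)

/-
In a power of `A`, a shift-invariant tuple is constant, and the hypothesis on `∇` forces the
constant to be `0` or `1`; hence `K(A^k) = {0, 1}`.

Any `C_k`-algebra with `K = {0, 1}` is simple. By the modal axiom each `△x` is fixed by `∇`, and the
fixed points of `∇`, being the `z` with `z ∧ ∼z = 0`, are closed under meets. So
`⋀_{i < k} t^i(△x)` lies in `K`, lies below `x`, and belongs to every c-filter containing `x`;
for `x ≠ 1` it can only be `0`.
-/

namespace MpM

theorem dm_inf (x y : A) : dm (x ⊓ y) = dm x ⊔ dm y := by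
  rw [← dm_dm (dm x ⊔ dm y), dm_sup, dm_dm, dm_dm]

theorem dm_antitone : Antitone (dm : A → A) := fun x y hxy => by
  rw [← sup_eq_right.mpr hxy, dm_sup]
  exact inf_le_left

theorem dm_le_comm {x y : A} : dm x ≤ y ↔ dm y ≤ x :=
  ⟨fun h => (dm_antitone h).trans_eq (dm_dm x), fun h => (dm_antitone h).trans_eq (dm_dm y)⟩

theorem disjoint_iff_le_ps {x y : A} : Disjoint x y ↔ y ≤ ps x :=
  disjoint_iff.trans (pseudo x y)

theorem nabla_eq_sup (x : A) : nabla x = x ⊔ dm (ps x) := by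
  rw [nabla, dm_inf, dm_dm]

theorem le_nabla (x : A) : x ≤ nabla x :=
  le_sup_left.trans_eq (nabla_eq_sup x).symm

theorem tri_le (x : A) : tri x ≤ x :=
  dm_le_comm.mp (le_nabla (dm x))

theorem nabla_eq_self_iff_disjoint {x : A} : nabla x = x ↔ Disjoint x (dm x) := by
  rw [nabla_eq_sup, sup_eq_left, dm_le_comm, disjoint_iff_le_ps]

theorem nabla_bot : nabla (⊥ : A) = ⊥ :=
  nabla_eq_self_iff_disjoint.mpr disjoint_bot_left

theorem nabla_top : nabla (⊤ : A) = ⊤ :=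
  top_le_iff.mp (le_nabla ⊤)

theorem dm_inf_dm_ps_le (x : A) : dm x ⊓ dm (ps x) ≤ x := by
  rw [← dm_sup, dm_le_comm]
  exact le_sup_right.trans (modal x)

theorem disjoint_nabla_dm_nabla (x : A) : Disjoint (nabla x) (dm (nabla x)) := by
  have dm_nabla : dm (nabla x) = dm x ⊓ ps x := dm_dm _
  have disjoint_ps : Disjoint x (ps x) := disjoint_iff_le_ps.mpr le_rfl
  rw [dm_nabla, nabla_eq_sup, disjoint_sup_left]
  refine ⟨disjoint_ps.mono_right inf_le_right, disjoint_iff_inf_le.mpr ?_⟩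
  calc dm (ps x) ⊓ (dm x ⊓ ps x) = (dm x ⊓ dm (ps x)) ⊓ ps x := by
        rw [← inf_assoc, inf_comm (dm (ps x))]
    _ ≤ x ⊓ ps x := inf_le_inf_right _ (dm_inf_dm_ps_le x)
    _ ≤ ⊥ := disjoint_ps.le_bot

theorem nabla_tri (x : A) : nabla (tri x) = tri x := by
  rw [nabla_eq_self_iff_disjoint, tri, dm_dm]
  exact (disjoint_nabla_dm_nabla (dm x)).symm

theorem nabla_inf_eq_self {x y : A} (hx : nabla x = x) (hy : nabla y = y) :
    nabla (x ⊓ y) = x ⊓ y := by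
  rw [nabla_eq_self_iff_disjoint] at hx hy ⊢
  rw [dm_inf, disjoint_sup_right]
  exact ⟨hx.mono_left inf_le_left, hy.mono_left inf_le_right⟩

end MpM

namespace CkStr

variable {k : ℕ} (T : CkStr A k)

theorem commute_nabla : Function.Commute T.t nabla := fun x => by
  simp only [nabla, T.map_dm, T.map_inf, T.map_ps]

theorem bot_mem_Kset : ⊥ ∈ Kset T := ⟨T.map_bot, nabla_bot⟩

theorem top_mem_Kset : ⊤ ∈ Kset T := ⟨T.map_top, nabla_top⟩

/-- The meet `⋀_{i < k} t^i(x)` of the `t`-orbit of `x`, which turns a `∇`-fixed element into an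
element of `K(A)`. -/
def orbitInf (x : A) : A := (Finset.range k).inf fun i => T.t^[i] x

theorem orbitInf_le [NeZero k] (x : A) : T.orbitInf x ≤ x :=
  Finset.inf_le (f := fun i => T.t^[i] x) (Finset.mem_range.mpr (NeZero.pos k))

theorem map_orbitInf (x : A) : T.t (T.orbitInf x) = T.orbitInf x := by
  have shifted : T.t (T.orbitInf x) = (Finset.range k).inf fun i => T.t^[i + 1] x := by
    rw [orbitInf, Finset.apply_inf_eq_inf_comp T.t T.map_inf T.map_top]
    simp only [Function.comp_def, Function.iterate_succ_apply']
  rw [shifted, orbitInf]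
  cases k with
  | zero => rfl
  | succ n =>
    rw [Finset.range_add_one, Finset.inf_insert, T.periodic, ← Finset.range_add_one,
      Finset.range_add_one', Finset.inf_insert, Finset.inf_map]
    rfl

theorem orbitInf_mem_Kset {x : A} (hx : nabla x = x) : T.orbitInf x ∈ Kset T := by
  refine ⟨T.map_orbitInf x, ?_⟩
  refine Finset.inf_induction (p := fun y => nabla y = y) nabla_top
    (fun _ hy _ hz => nabla_inf_eq_self hy hz) fun i _ => ?_
  rw [← T.commute_nabla.iterate_left i x, hx]

end CkStr

namespace IsLatFilter

variable {F : Set A}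

theorem top_mem (hF : IsLatFilter F) : ⊤ ∈ F :=
  let ⟨x, hx⟩ := hF.1
  hF.2.1 x hx ⊤ le_top

theorem eq_univ_of_bot_mem (hF : IsLatFilter F) (h : ⊥ ∈ F) : F = Set.univ :=
  Set.eq_univ_of_forall fun x => hF.2.1 ⊥ h x bot_le

theorem finset_inf_mem (hF : IsLatFilter F) {ι : Type*} {s : Finset ι} {f : ι → A}
    (h : ∀ i ∈ s, f i ∈ F) : s.inf f ∈ F :=
  Finset.inf_induction (p := (· ∈ F)) hF.top_mem hF.2.2 h

end IsLatFilter

namespace IsCFilter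

variable {k : ℕ} {T : CkStr A k} {F : Set A}

theorem orbitInf_mem (hF : IsCFilter T F) {x : A} (hx : x ∈ F) : T.orbitInf x ∈ F :=
  have mapsTo : Set.MapsTo T.t F F := fun y hy => (hF.2 y hy).2
  hF.1.finset_inf_mem fun i _ => mapsTo.iterate i hx

theorem eq_singleton_top_or_eq_univ [NeZero k] (hF : IsCFilter T F) (hK : Kset T ⊆ {⊥, ⊤}) :
    F = {⊤} ∨ F = Set.univ := by
  refine or_iff_not_imp_right.mpr fun hproper => ?_
  refine Set.eq_singleton_iff_unique_mem.mpr ⟨hF.1.top_mem, fun x hx => ?_⟩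
  have mem : T.orbitInf (tri x) ∈ F := hF.orbitInf_mem (hF.2 x hx).1
  have le : T.orbitInf (tri x) ≤ x := (T.orbitInf_le _).trans (tri_le x)
  rcases hK (T.orbitInf_mem_Kset (nabla_tri x)) with hbot | htop
  · exact absurd (hF.1.eq_univ_of_bot_mem (hbot ▸ mem)) hproper
  · exact top_le_iff.mp (htop ▸ le)

end IsCFilter

theorem iterate_translate {G α : Type*} [AddCommGroup G] (a : G) (n : ℕ) (f : G → α) :
    (translate a)^[n] f = translate (n • a) f := by
  induction n with
  | zero => rw [zero_nsmul, translate_zero, Function.iterate_zero_apply]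
  | succ n ih => rw [Function.iterate_succ_apply', ih, ← translate_add, ← succ_nsmul']

namespace CkStr

variable {k : ℕ} [NeZero k]

variable (A k) in
/-- The shift `t(x₁, …, x_k) = (x_k, x₁, …, x_{k-1})` on `A^k`, that is, `t(f)(i) = f(i - 1)` with
indices modulo `k`. -/
def shift : CkStr (Fin k → A) k where
  t := translate 1
  bij := ((Equiv.subRight (1 : Fin k)).arrowCongr (Equiv.refl A)).symm.bijective
  map_inf _ _ := rfl
  map_sup _ _ := rfl
  map_dm _ := rfl
  map_ps _ := rfl
  map_bot := rfl
  map_top := rfl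
  periodic f := by
    have card_nsmul_one : k • (1 : Fin k) = 0 := by
      simpa only [Nat.card_fin] using card_nsmul_eq_zero' (x := (1 : Fin k))
    rw [iterate_translate, card_nsmul_one, translate_zero]

open scoped Fin.NatCast in
theorem apply_eq_apply_zero_of_shift_eq_self {f : Fin k → A} (hf : (shift A k).t f = f)
    (i : Fin k) : f i = f 0 := by
  have val_nsmul_one : i.val • (1 : Fin k) = i := by rw [nsmul_one, Fin.cast_val_eq_self]
  calc f i = (shift A k).t^[i] f i := (congrFun (Function.iterate_fixed hf i) i).symm
    _ = f (i - i.val • 1) := congrFun (iterate_translate 1 i.val f) i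
    _ = f 0 := by rw [val_nsmul_one, sub_self]

theorem Kset_shift (hnab : ∀ x : A, x ≠ ⊥ → nabla x = ⊤) :
    Kset (shift A k) = {⊥, ⊤} := by
  refine Set.Subset.antisymm (fun f ⟨hshift, hnabla⟩ => ?_) ?_
  · have const : f = fun _ => f 0 := funext (apply_eq_apply_zero_of_shift_eq_self hshift)
    have nabla_zero : nabla (f 0) = f 0 := congrFun hnabla 0
    rw [const]
    by_cases hzero : f 0 = ⊥
    · exact Or.inl (funext fun _ => hzero)
    · exact Or.inr (funext fun _ => nabla_zero.symm.trans (hnab _ hzero))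
  · rintro _ (rfl | rfl)
    exacts [bot_mem_Kset _, top_mem_Kset _]

end CkStr

theorem stmt16 {k : ℕ} [NeZero k] (hnt : (⊥ : A) ≠ ⊤)
    (hnab : ∀ x : A, x ≠ ⊥ → nabla x = ⊤) :
    ∃ T : CkStr (Fin k → A) k,
      (∀ (f : Fin k → A) (i : Fin k), T.t f i = f (i - 1)) ∧
      Kset T = {(⊥ : Fin k → A), ⊤} ∧
      ∀ F : Set (Fin k → A), IsCFilter T F → F = {(⊤ : Fin k → A)} ∨ F = Set.univ := by
  have hK : Kset (CkStr.shift A k) = {⊥, ⊤} := CkStr.Kset_shift hnab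
  exact ⟨CkStr.shift A k, fun _ _ => rfl, hK,
    fun _ hF => hF.eq_singleton_top_or_eq_univ hK.subset⟩
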